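/- arXiv:2503.21678 — 2 statements merged into one kernel-verified Lean document; each statement's English description precedes it below -/
import Mathlib

section
/- Let I ⊆ ℝ be a nonempty open interval, p ∈ ℝ, n ∈ ℕ∪{0}, and μ a bounded signed Borel measure on [0,1]. Define J(p) := (−∞, (p − inf I)/(sup I − inf I)) if p ≤ inf I; J(p) := ℝ if p ∈ I; and J(p) := (1 + (p − sup I)/(sup I − inf I), ∞) if p ≥ sup I (these formulas interpreted appropriately when I is unbounded, in which case J(p) = (−∞,0), ℝ, (1,∞) respectively). Then the function f := −φ_{p,n}, restricted to I, satisfies ∫_{[0,1]} f((1−t)x + t y) dμ(t) ≥ 0 for all x, y ∈ I with x < y if and only if μ_n(λ) ≤ 0 for all λ ∈ J(p). -/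
open MeasureTheory Set

/-- Integral of `f` over the set `A` with respect to the (automatically bounded) signed
Borel measure `μ`, defined via the Jordan decomposition. -/
noncomputable def sInt (μ : MeasureTheory.SignedMeasure ℝ) (A : Set ℝ) (f : ℝ → ℝ) : ℝ :=
  (∫ t in A, f t ∂μ.toJordanDecomposition.posPart) -
  (∫ t in A, f t ∂μ.toJordanDecomposition.negPart)

/-- `μ_k(τ) = ∫_{[0,1]} (t-τ)^k dμ(t)` (with the convention `0^0 = 1`). -/
noncomputable def muK (μ : MeasureTheory.SignedMeasure ℝ) (k : ℕ) (τ : ℝ) : ℝ :=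
  sInt μ (Icc 0 1) (fun t => (t - τ) ^ k)

/-- `μ_k^-(τ) = ∫_{[0,τ)} (t-τ)^k dμ(t)`. -/
noncomputable def muMinus (μ : MeasureTheory.SignedMeasure ℝ) (k : ℕ) (τ : ℝ) : ℝ :=
  sInt μ (Ico 0 τ) (fun t => (t - τ) ^ k)

/-- `μ_k^+(τ) = ∫_{(τ,1]} (t-τ)^k dμ(t)`. -/
noncomputable def muPlus (μ : MeasureTheory.SignedMeasure ℝ) (k : ℕ) (τ : ℝ) : ℝ :=
  sInt μ (Ioc τ 1) (fun t => (t - τ) ^ k)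

/-- The `n`th-order divided difference of `f` at the points `x 0, …, x n`. -/
noncomputable def divDiff (f : ℝ → ℝ) (n : ℕ) (x : Fin (n + 1) → ℝ) : ℝ :=
  ∑ j : Fin (n + 1), f (x j) / ∏ i ∈ Finset.univ.erase j, (x j - x i)

/-- `f` is `n`-increasing on `I`: all `n`th-order divided differences at pairwise
distinct points of `I` are nonnegative. -/
def nIncreasingOn (f : ℝ → ℝ) (I : Set ℝ) (n : ℕ) : Prop :=
  ∀ x : Fin (n + 1) → ℝ, Function.Injective x → (∀ j, x j ∈ I) → 0 ≤ divDiff f n x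

/-- `f` is `n`-decreasing on `I` if `-f` is `n`-increasing on `I`. -/
def nDecreasingOn (f : ℝ → ℝ) (I : Set ℝ) (n : ℕ) : Prop :=
  nIncreasingOn (fun u => -f u) I n

/-- `φ⁺_{p,n}(u) = ((u-p)_+)^n` for `n ≥ 1`, and `φ⁺_{p,0}` is the characteristic
function of `(p,∞)`. -/
noncomputable def phiPlus (p : ℝ) (n : ℕ) (u : ℝ) : ℝ :=
  if n = 0 then (if p < u then 1 else 0) else (max 0 (u - p)) ^ n

/-- `φ⁻_{p,n}(u) = ((u-p)_−)^n` for `n ≥ 1`, and `φ⁻_{p,0}` is the characteristic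
function of `(−∞,p)`. -/
noncomputable def phiMinus (p : ℝ) (n : ℕ) (u : ℝ) : ℝ :=
  if n = 0 then (if u < p then 1 else 0) else (max 0 (p - u)) ^ n

/- The set `J(p)` associated with an interval `I` and a point `p ∈ ℝ`:
`(−∞, (p − inf I)/(sup I − inf I))` if `p ≤ inf I` (interpreted as `(−∞,0)` when `I` is
unbounded above), `ℝ` if `p ∈ I`, and `(1 + (p − sup I)/(sup I − inf I), ∞)` if
`p ≥ sup I` (interpreted as `(1,∞)` when `I` is unbounded below). -/
open scoped Classical in
noncomputable def Jset (I : Set ℝ) (p : ℝ) : Set ℝ :=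
  if p ∈ I then Set.univ
  else if p ∈ lowerBounds I then
    (if BddAbove I then Set.Iio ((p - sInf I) / (sSup I - sInf I)) else Set.Iio 0)
  else
    (if BddBelow I then Set.Ioi (1 + (p - sSup I) / (sSup I - sInf I)) else Set.Ioi 1)

/-!
If `p = (1 - λ) x + λ y`, then `(1 - t) x + t y - p = (y - x) (t - λ)`, so for `x < y` the integral
of `-φ_{p,n}` along the chord from `x` to `y` has the sign of `-μ_n(λ)`. It remains to see that
`J(p)` is exactly the set of `λ` arising from chords in `I`. When `p` lies below `I`, such a `λ` is
negative, and for fixed `λ < 0` the right endpoint `y` increases with the left endpoint `x`; as `x`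
decreases to `a = inf I`, it tends to `a + (p - a) / λ`, so `λ` arises exactly when this limit is
less than `sup I`. The case of `p` above `I` follows by reflection.
-/

open AffineMap Topology

section Intervals

variable {α : Type*} [ConditionallyCompleteLinearOrder α] [TopologicalSpace α] [OrderTopology α]
  [DenselyOrdered α] {s : Set α}

theorem subset_Ioi_csInf_of_isOpen [NoMinOrder α] (hs : IsOpen s) (hb : BddBelow s) :
    s ⊆ Ioi (sInf s) := by
  rw [← interior_Ici]
  exact hs.subset_interior_iff.2 fun _ hx => csInf_le hb hx

theorem subset_Iio_csSup_of_isOpen [NoMaxOrder α] (hs : IsOpen s) (hb : BddAbove s) :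
    s ⊆ Iio (sSup s) :=
  subset_Ioi_csInf_of_isOpen (α := αᵒᵈ) hs hb

theorem eq_Ioo_of_isOpen_of_ordConnected [NoMinOrder α] [NoMaxOrder α] (hs : IsOpen s)
    (hc : s.OrdConnected) (hne : s.Nonempty) (hb : BddBelow s) (ha : BddAbove s) :
    s = Ioo (sInf s) (sSup s) :=
  (subset_inter (subset_Ioi_csInf_of_isOpen hs hb) (subset_Iio_csSup_of_isOpen hs ha)).antisymm
    (IsConnected.Ioo_csInf_csSup_subset ⟨hne, hc.isPreconnected⟩ hb ha)

theorem eq_Ioi_of_isOpen_of_ordConnected [NoMinOrder α] (hs : IsOpen s) (hc : s.OrdConnected)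
    (hb : BddBelow s) (ha : ¬BddAbove s) : s = Ioi (sInf s) :=
  (subset_Ioi_csInf_of_isOpen hs hb).antisymm (hc.isPreconnected.Ioi_csInf_subset hb ha)

theorem eq_Iio_of_isOpen_of_ordConnected [NoMaxOrder α] (hs : IsOpen s) (hc : s.OrdConnected)
    (hb : ¬BddBelow s) (ha : BddAbove s) : s = Iio (sSup s) :=
  (subset_Iio_csSup_of_isOpen hs ha).antisymm (hc.isPreconnected.Iio_csSup_subset hb ha)

end Intervals

theorem mem_upperBounds_of_notMem_lowerBounds {α : Type*} [LinearOrder α] {s : Set α} {p : α}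
    (hc : s.OrdConnected) (hp : p ∉ s) (hl : p ∉ lowerBounds s) : p ∈ upperBounds s := by
  obtain ⟨z, hz, hzp⟩ : ∃ z ∈ s, z < p := by simpa [lowerBounds] using hl
  intro x hx
  by_contra! hpx
  exact hp (hc.out hz hx ⟨hzp.le, hpx.le⟩)

theorem lineMap_surjective {𝕜 : Type*} [DivisionRing 𝕜] {x y : 𝕜} (hxy : x ≠ y) :
    Function.Surjective (lineMap x y : 𝕜 → 𝕜) := fun p =>
  ⟨(p - x) / (y - x), by
    rw [lineMap_apply_ring', div_mul_cancel₀ _ (sub_ne_zero.2 hxy.symm), sub_add_cancel]⟩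

section ChordParameters

variable {𝕜 : Type*} [Field 𝕜] [LinearOrder 𝕜]

/-- The parameters `λ` for which some `x < y` in `I` satisfy `p = (1 - λ) x + λ y`, where `p` need
not lie between `x` and `y`. For a nonempty open interval `I` of real numbers this is `J(p)`,
described without reference to the endpoints of `I`. -/
def chordParameters (I : Set 𝕜) (p : 𝕜) : Set 𝕜 :=
  {lam | ∃ x ∈ I, ∃ y ∈ I, x < y ∧ lineMap x y lam = p}

variable [IsStrictOrderedRing 𝕜] {I T : Set 𝕜} {a b p y lam : 𝕜}

theorem one_sub_mem_chordParameters_neg (h : lam ∈ chordParameters I p) :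
    1 - lam ∈ chordParameters (-I) (-p) := by
  obtain ⟨x, hx, y, hy, hxy, rfl⟩ := h
  refine ⟨-y, by simpa using hy, -x, by simpa using hx, neg_lt_neg hxy, ?_⟩
  rw [lineMap_apply_one_sub, lineMap_apply_ring, lineMap_apply_ring]
  ring

theorem mem_chordParameters_iff_one_sub_mem_neg :
    lam ∈ chordParameters I p ↔ 1 - lam ∈ chordParameters (-I) (-p) :=
  ⟨one_sub_mem_chordParameters_neg,
    fun h => by simpa using one_sub_mem_chordParameters_neg h⟩

theorem chordParameters_eq_univ [TopologicalSpace 𝕜] [OrderTopology 𝕜] (hI : I ∈ 𝓝 p) :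
    chordParameters I p = univ := by
  refine eq_univ_of_forall fun lam => ?_
  have eventually_mem (c : 𝕜) : ∀ᶠ d in 𝓝[>] (0 : 𝕜), p + c * d ∈ I := by
    have hcont : ContinuousAt (fun d => p + c * d) 0 := by fun_prop
    exact nhdsWithin_le_nhds (hcont (by simpa using hI))
  obtain ⟨d, ⟨hx, hy⟩, hd : 0 < d⟩ :=
    ((eventually_mem (-lam)).and (eventually_mem (1 - lam))).and self_mem_nhdsWithin |>.exists
  have hxy : p + -lam * d < p + (1 - lam) * d := by gcongr; linarith
  refine ⟨_, hx, _, hy, hxy, ?_⟩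
  rw [lineMap_apply_ring]
  ring

theorem exists_mem_Ioo_lineMap_eq_iff (hpa : p ≤ a) :
    (∃ x ∈ Ioo a y, lineMap x y lam = p) ↔ lam < 0 ∧ a + (p - a) / lam < y := by
  have endpoint_lt_iff (hlam : lam < 0) : a + (p - a) / lam < y ↔ (1 - lam) * a < p - lam * y := by
    rw [← lt_sub_iff_add_lt', div_lt_iff_of_neg hlam, ← sub_pos, ← sub_pos (b := (1 - lam) * a)]
    ring_nf
  constructor
  · rintro ⟨x, ⟨hax, hxy⟩, rfl⟩
    have hlam : lam < 0 := (lineMap_lt_left_iff_neg hxy).1 (hpa.trans_lt hax)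
    refine ⟨hlam, (endpoint_lt_iff hlam).2 ?_⟩
    rw [lineMap_apply_ring, add_sub_cancel_right]
    exact mul_lt_mul_of_pos_left hax (by linarith)
  · rintro ⟨hlam, hy⟩
    have hpy : p < y := by
      have : 0 ≤ (p - a) / lam := div_nonneg_of_nonpos (sub_nonpos.2 hpa) hlam.le
      linarith
    have hpos : 0 < 1 - lam := by linarith
    refine ⟨(p - lam * y) / (1 - lam), ⟨?_, ?_⟩, ?_⟩
    · rw [lt_div_iff₀' hpos]
      exact (endpoint_lt_iff hlam).1 hy
    · rw [div_lt_iff₀ hpos]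
      linarith
    · rw [lineMap_apply_ring, mul_div_cancel₀ _ hpos.ne', sub_add_cancel]

theorem mem_chordParameters_Ioi_inter_iff (hT : IsLowerSet T) (hpa : p ≤ a) :
    lam ∈ chordParameters (Ioi a ∩ T) p ↔ lam < 0 ∧ ∃ y ∈ T, a + (p - a) / lam < y := by
  calc lam ∈ chordParameters (Ioi a ∩ T) p
      ↔ ∃ y ∈ T, ∃ x ∈ Ioo a y, lineMap x y lam = p :=
        ⟨fun ⟨x, hx, y, hy, hxy, h⟩ => ⟨y, hy.2, x, ⟨hx.1, hxy⟩, h⟩,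
          fun ⟨y, hy, x, ⟨hax, hxy⟩, h⟩ =>
            ⟨x, ⟨hax, hT hxy.le hy⟩, y, ⟨hax.trans hxy, hy⟩, hxy, h⟩⟩
    _ ↔ ∃ y ∈ T, lam < 0 ∧ a + (p - a) / lam < y := by
        simp only [exists_mem_Ioo_lineMap_eq_iff hpa]
    _ ↔ lam < 0 ∧ ∃ y ∈ T, a + (p - a) / lam < y := by tauto

theorem chordParameters_Ioi (hpa : p ≤ a) : chordParameters (Ioi a) p = Iio 0 := by
  ext lam
  rw [← inter_univ (Ioi a), mem_chordParameters_Ioi_inter_iff isLowerSet_univ hpa]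
  simp [exists_gt]

theorem chordParameters_Ioo_of_le_left (hab : a < b) (hpa : p ≤ a) :
    chordParameters (Ioo a b) p = Iio ((p - a) / (b - a)) := by
  have hba : 0 < b - a := sub_pos.2 hab
  have hbound : (p - a) / (b - a) ≤ 0 := div_nonpos_of_nonpos_of_nonneg (sub_nonpos.2 hpa) hba.le
  ext lam
  calc lam ∈ chordParameters (Ioo a b) p
      ↔ lam < 0 ∧ ∃ y < b, a + (p - a) / lam < y :=
        mem_chordParameters_Ioi_inter_iff (isLowerSet_Iio b) hpa
    _ ↔ lam < 0 ∧ (p - a) / lam < b - a := by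
        rw [lt_sub_iff_add_lt']
        exact and_congr_right fun _ => ⟨fun ⟨y, hyb, hy⟩ => hy.trans hyb,
          fun h => (exists_between h).imp fun _ => And.symm⟩
    _ ↔ lam < 0 ∧ lam < (p - a) / (b - a) :=
        and_congr_right fun hlam => by rw [div_lt_iff_of_neg hlam, lt_div_iff₀' hba]
    _ ↔ lam < (p - a) / (b - a) := and_iff_right_of_imp fun h => h.trans_le hbound

theorem chordParameters_Iio (hbp : b ≤ p) : chordParameters (Iio b) p = Ioi 1 := by
  ext lam
  rw [mem_chordParameters_iff_one_sub_mem_neg, neg_Iio, chordParameters_Ioi (neg_le_neg hbp)]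
  exact sub_neg

theorem chordParameters_Ioo_of_right_le (hab : a < b) (hbp : b ≤ p) :
    chordParameters (Ioo a b) p = Ioi (1 + (p - b) / (b - a)) := by
  ext lam
  rw [mem_chordParameters_iff_one_sub_mem_neg, neg_Ioo,
    chordParameters_Ioo_of_le_left (neg_lt_neg hab) (neg_le_neg hbp), mem_Iio, mem_Ioi,
    neg_sub_neg, neg_sub_neg, ← neg_sub p b, neg_div]
  constructor <;> intro h <;> linarith

end ChordParameters

theorem Jset_eq_chordParameters {I : Set ℝ} (hIo : IsOpen I) (hIc : I.OrdConnected)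
    (hIne : I.Nonempty) (p : ℝ) : Jset I p = chordParameters I p := by
  have sInf_lt_sSup (hb : BddBelow I) (ha : BddAbove I) : sInf I < sSup I :=
    nonempty_Ioo.1 (eq_Ioo_of_isOpen_of_ordConnected hIo hIc hIne hb ha ▸ hIne)
  unfold Jset
  split_ifs with hp hl ha hb
  · exact (chordParameters_eq_univ (hIo.mem_nhds hp)).symm
  · have hb : BddBelow I := ⟨p, hl⟩
    conv_rhs => rw [eq_Ioo_of_isOpen_of_ordConnected hIo hIc hIne hb ha]
    exact (chordParameters_Ioo_of_le_left (sInf_lt_sSup hb ha) (le_csInf hIne hl)).symm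
  · conv_rhs => rw [eq_Ioi_of_isOpen_of_ordConnected hIo hIc ⟨p, hl⟩ ha]
    exact (chordParameters_Ioi (le_csInf hIne hl)).symm
  all_goals have hu : p ∈ upperBounds I := mem_upperBounds_of_notMem_lowerBounds hIc hp hl
  · have ha : BddAbove I := ⟨p, hu⟩
    conv_rhs => rw [eq_Ioo_of_isOpen_of_ordConnected hIo hIc hIne hb ha]
    exact (chordParameters_Ioo_of_right_le (sInf_lt_sSup hb ha) (csSup_le hIne hu)).symm
  · conv_rhs => rw [eq_Iio_of_isOpen_of_ordConnected hIo hIc hb ⟨p, hu⟩]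
    exact (chordParameters_Iio (csSup_le hIne hu)).symm

theorem sInt_const_mul (μ : SignedMeasure ℝ) (A : Set ℝ) (c : ℝ) (f : ℝ → ℝ) :
    sInt μ A (fun t => c * f t) = c * sInt μ A f := by
  rw [sInt, sInt, integral_const_mul, integral_const_mul, mul_sub]

theorem sub_lineMap_pow {R : Type*} [CommRing R] (x y t lam : R) (n : ℕ) :
    ((1 - t) * x + t * y - lineMap x y lam) ^ n = (y - x) ^ n * (t - lam) ^ n := by
  rw [lineMap_apply_ring, ← mul_pow]
  ring

theorem sInt_neg_sub_lineMap_pow_nonneg_iff (μ : SignedMeasure ℝ) (A : Set ℝ) (n : ℕ) {x y : ℝ}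
    (hxy : x < y) (lam : ℝ) :
    0 ≤ sInt μ A (fun t => -(((1 - t) * x + t * y - lineMap x y lam) ^ n)) ↔
      sInt μ A (fun t => (t - lam) ^ n) ≤ 0 := by
  have hpow : 0 < (y - x) ^ n := pow_pos (sub_pos.2 hxy) n
  simp only [sub_lineMap_pow, ← neg_mul, sInt_const_mul]
  rw [neg_mul, ← mul_neg, mul_nonneg_iff_of_pos_left hpow, neg_nonneg]

theorem stmt5 (I : Set ℝ) (hIo : IsOpen I) (hIc : I.OrdConnected) (hIne : I.Nonempty)
    (p : ℝ) (n : ℕ) (μ : MeasureTheory.SignedMeasure ℝ) :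
    (∀ x ∈ I, ∀ y ∈ I, x < y →
        0 ≤ sInt μ (Icc 0 1) (fun t => -(((1 - t) * x + t * y - p) ^ n))) ↔
      ∀ lam ∈ Jset I p, muK μ n lam ≤ 0 := by
  rw [Jset_eq_chordParameters hIo hIc hIne]
  constructor
  · rintro h lam ⟨x, hx, y, hy, hxy, rfl⟩
    exact (sInt_neg_sub_lineMap_pow_nonneg_iff μ _ n hxy lam).1 (h x hx y hy hxy)
  · intro h x hx y hy hxy
    obtain ⟨lam, rfl⟩ := lineMap_surjective hxy.ne p
    exact (sInt_neg_sub_lineMap_pow_nonneg_iff μ _ n hxy lam).2 (h lam ⟨x, hx, y, hy, hxy, rfl⟩)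
end

section
/- Let I ⊆ ℝ be a nonempty open interval, p ∈ ℝ with sup I ≤ p, and n, k ∈ ℕ∪{0} with 0 ≤ k < n. Then the function (−1)^{n−k} φ_{p,n}, i.e. u ↦ (−1)^{n−k}(u−p)^n, is k-increasing on I but not k-decreasing on I. -/
open MeasureTheory Set

/-!
The reflection `u ↦ p - u` turns the function at hand into the monomial `u ^ n` at the nonnegative
nodes `y i = p - x i`, all signs cancelling. With `m = n - k`, the divided difference of
`u ^ (k + m)` at `y 0, …, y k` is the complete homogeneous symmetric polynomial `h_m(y 0, …, y k)`.
All its monomials are nonnegative and one of them is `y k ^ m`, so `y k ^ m` is a lower bound, which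
is positive as soon as `x k ≠ p`. The proof is an induction along the recursion
`h_{m+1}(y 0, …, y (k + 1)) = y 0 * h_m(y 0, …, y (k + 1)) + h_{m+1}(y 1, …, y (k + 1))`.
-/

theorem prod_univ_erase_succ {M : Type*} [CommMonoid M] {k : ℕ} (j : Fin (k + 1))
    (g : Fin (k + 2) → M) :
    ∏ i ∈ Finset.univ.erase j.succ, g i = g 0 * ∏ i ∈ Finset.univ.erase j, g i.succ := by
  have erase_succ : Finset.univ.erase j.succ =
      insert 0 ((Finset.univ.erase j).map (Fin.succEmb (k + 1))) := by
    ext i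
    cases i using Fin.cases <;> simp [(Fin.succ_ne_zero j).symm]
  rw [erase_succ, Finset.prod_insert (by simp), Finset.prod_map]
  rfl

section DivDiff

variable {f g : ℝ → ℝ} {k : ℕ}

theorem divDiff_zero (x : Fin 1 → ℝ) : divDiff f 0 x = f (x 0) := by
  simp [divDiff]

theorem divDiff_add (x : Fin (k + 1) → ℝ) :
    divDiff (fun u => f u + g u) k x = divDiff f k x + divDiff g k x := by
  simp only [divDiff, add_div, Finset.sum_add_distrib]

theorem divDiff_const_mul (c : ℝ) (x : Fin (k + 1) → ℝ) :
    divDiff (fun u => c * f u) k x = c * divDiff f k x := by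
  simp only [divDiff, mul_div_assoc, Finset.mul_sum]

theorem divDiff_neg (x : Fin (k + 1) → ℝ) :
    divDiff (fun u => -f u) k x = -divDiff f k x := by
  simp only [divDiff, neg_div, Finset.sum_neg_distrib]

theorem divDiff_comp_const_sub (p : ℝ) (x : Fin (k + 1) → ℝ) :
    divDiff (fun u => f (p - u)) k x = (-1) ^ k * divDiff f k (fun i => p - x i) := by
  have prod_reflect (j : Fin (k + 1)) :
      ∏ i ∈ Finset.univ.erase j, ((p - x j) - (p - x i)) =
        (-1) ^ k * ∏ i ∈ Finset.univ.erase j, (x j - x i) := by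
    calc
      _ = ∏ i ∈ Finset.univ.erase j, -(x j - x i) := Finset.prod_congr rfl fun i _ => by ring
      _ = _ := by rw [Finset.prod_neg, Finset.card_erase_of_mem (Finset.mem_univ j)]; simp
  simp only [divDiff, Finset.mul_sum, prod_reflect]
  refine Finset.sum_congr rfl fun j _ => ?_
  rw [← mul_div_assoc, mul_div_mul_left _ _ (pow_ne_zero k (by norm_num))]

theorem divDiff_sub_mul (y : Fin (k + 2) → ℝ) (hy : ∀ j : Fin (k + 1), y j.succ ≠ y 0) :
    divDiff (fun u => (u - y 0) * f u) (k + 1) y = divDiff f k (fun i => y i.succ) := by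
  simp only [divDiff]
  rw [Fin.sum_univ_succ, sub_self, zero_mul, zero_div, zero_add]
  refine Finset.sum_congr rfl fun j _ => ?_
  rw [prod_univ_erase_succ, mul_div_mul_left _ _ (sub_ne_zero.2 (hy j))]

end DivDiff

section Monomials

variable {k : ℕ}

theorem divDiff_pow_self {y : Fin (k + 1) → ℝ} (hy : Function.Injective y) :
    divDiff (fun u => u ^ k) k y = 1 := by
  have leadingCoeff_eq := Lagrange.leadingCoeff_eq_sum (s := Finset.univ) (v := y)
    (P := Polynomial.X ^ k) hy.injOn (by simp)
  simpa [divDiff] using leadingCoeff_eq.symm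

theorem divDiff_pow_succ (n : ℕ) (y : Fin (k + 2) → ℝ) (hy : ∀ j : Fin (k + 1), y j.succ ≠ y 0) :
    divDiff (fun u => u ^ (n + 1)) (k + 1) y =
      y 0 * divDiff (fun u => u ^ n) (k + 1) y +
        divDiff (fun u => u ^ n) k (fun i => y i.succ) := by
  rw [← divDiff_sub_mul y hy, ← divDiff_const_mul, ← divDiff_add]
  congr 1
  ext u
  ring

theorem pow_le_divDiff_pow (m : ℕ) {y : Fin (k + 1) → ℝ} (hy : Function.Injective y)
    (hy_nonneg : ∀ i, 0 ≤ y i) :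
    y (Fin.last k) ^ m ≤ divDiff (fun u => u ^ (k + m)) k y := by
  induction m generalizing k with
  | zero => simp [divDiff_pow_self hy]
  | succ m ihm =>
    induction k with
    | zero => simp [divDiff_zero]
    | succ k ihk =>
      have tail_le : y (Fin.last (k + 1)) ^ (m + 1) ≤
          divDiff (fun u => u ^ (k + 1 + m)) k (fun i => y i.succ) := by
        rw [add_right_comm, add_assoc]
        exact ihk (hy.comp (Fin.succ_injective _)) fun i => hy_nonneg i.succ
      have divDiff_nonneg : 0 ≤ divDiff (fun u => u ^ (k + 1 + m)) (k + 1) y :=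
        (pow_nonneg (hy_nonneg _) m).trans (ihm hy hy_nonneg)
      calc
        _ ≤ divDiff (fun u => u ^ (k + 1 + m)) k (fun i => y i.succ) := tail_le
        _ ≤ y 0 * divDiff (fun u => u ^ (k + 1 + m)) (k + 1) y +
              divDiff (fun u => u ^ (k + 1 + m)) k (fun i => y i.succ) :=
          le_add_of_nonneg_left (mul_nonneg (hy_nonneg 0) divDiff_nonneg)
        _ = _ := (divDiff_pow_succ _ y fun j => hy.ne (Fin.succ_ne_zero j)).symm

theorem divDiff_neg_one_pow_mul_sub_pow (p : ℝ) {n : ℕ} (hkn : k ≤ n) (x : Fin (k + 1) → ℝ) :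
    divDiff (fun u => (-1) ^ (n - k) * (u - p) ^ n) k x =
      divDiff (fun u => u ^ n) k (fun i => p - x i) := by
  have reflect (u : ℝ) : (-1) ^ (n - k) * (u - p) ^ n = (-1) ^ k * (p - u) ^ n := by
    obtain ⟨m, rfl⟩ := Nat.exists_eq_add_of_le hkn
    rw [Nat.add_sub_cancel_left]
    calc
      (-1) ^ m * (u - p) ^ (k + m) = (-1) ^ m * ((-1) ^ (k + m) * (p - u) ^ (k + m)) := by
        rw [← neg_sub p u, neg_pow (p - u)]
      _ = ((-1) ^ m * (-1) ^ m) * ((-1) ^ k * (p - u) ^ (k + m)) := by ring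
      _ = (-1) ^ k * (p - u) ^ (k + m) := by rw [← mul_pow]; simp
  simp only [reflect]
  rw [divDiff_const_mul, divDiff_comp_const_sub (f := fun u => u ^ n), ← mul_assoc, ← mul_pow]
  simp

theorem pow_le_divDiff_neg_one_pow_mul_sub_pow {p : ℝ} {n : ℕ} (hkn : k ≤ n)
    {x : Fin (k + 1) → ℝ} (hx : Function.Injective x) (hxp : ∀ i, x i ≤ p) :
    (p - x (Fin.last k)) ^ (n - k) ≤
      divDiff (fun u => (-1) ^ (n - k) * (u - p) ^ n) k x := by
  have lower_bound := pow_le_divDiff_pow (n - k) ((sub_right_injective (b := p)).comp hx)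
    fun i => sub_nonneg.2 (hxp i)
  rw [Nat.add_sub_of_le hkn] at lower_bound
  rw [divDiff_neg_one_pow_mul_sub_pow p hkn]
  exact lower_bound

end Monomials

theorem not_nDecreasingOn_of_divDiff_pos {f : ℝ → ℝ} {I : Set ℝ} {k : ℕ} {x : Fin (k + 1) → ℝ}
    (hx : Function.Injective x) (hxI : ∀ j, x j ∈ I) (hpos : 0 < divDiff f k x) :
    ¬ nDecreasingOn f I k := fun hdec => by
  have hneg := hdec x hx hxI
  rw [divDiff_neg] at hneg
  linarith

theorem exists_injective_forall_mem_of_infinite {α : Type*} {s : Set α} (hs : s.Infinite) (n : ℕ) :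
    ∃ x : Fin n → α, Function.Injective x ∧ ∀ j, x j ∈ s :=
  ⟨fun j => hs.natEmbedding s j,
    Subtype.val_injective.comp ((hs.natEmbedding s).injective.comp Fin.val_injective),
    fun j => (hs.natEmbedding s j).2⟩

theorem stmt11_general {I : Set ℝ} (hI : I.Infinite) {p : ℝ} (hp : p ∈ upperBounds I)
    {n k : ℕ} (hkn : k ≤ n) :
    nIncreasingOn (fun u => (-1 : ℝ) ^ (n - k) * (u - p) ^ n) I k ∧
      ¬ nDecreasingOn (fun u => (-1 : ℝ) ^ (n - k) * (u - p) ^ n) I k := by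
  constructor
  · intro x hx hxI
    exact (pow_nonneg (sub_nonneg.2 (hp (hxI _))) _).trans
      (pow_le_divDiff_neg_one_pow_mul_sub_pow hkn hx fun i => hp (hxI i))
  · obtain ⟨x, hx, hxI⟩ :=
      exists_injective_forall_mem_of_infinite (hI.sdiff (finite_singleton p)) (k + 1)
    have last_lt : x (Fin.last k) < p := (hp (hxI _).1).lt_of_ne (hxI _).2
    refine not_nDecreasingOn_of_divDiff_pos hx (fun j => (hxI j).1) ?_
    exact (pow_pos (sub_pos.2 last_lt) _).trans_le
      (pow_le_divDiff_neg_one_pow_mul_sub_pow hkn hx fun i => hp (hxI i).1)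

theorem stmt11 (I : Set ℝ) (hIo : IsOpen I) (hIc : I.OrdConnected) (hIne : I.Nonempty)
    (p : ℝ) (hp : p ∈ upperBounds I) (n k : ℕ) (hkn : k < n) :
    nIncreasingOn (fun u => (-1 : ℝ) ^ (n - k) * (u - p) ^ n) I k ∧
      ¬ nDecreasingOn (fun u => (-1 : ℝ) ^ (n - k) * (u - p) ^ n) I k := by
  obtain ⟨u, hu⟩ := hIne
  exact stmt11_general (infinite_of_mem_nhds u (hIo.mem_nhds hu)) hp hkn.le
end
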